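/- Let A be a connected commutative cocommutative graded Hopf algebra over the field F_p (p prime). Then A is isomorphic as a graded algebra to a polynomial algebra if and only if the Frobenius map ξ: A → A, x ↦ x^p, is injective. -/

import Mathlib

/-!
STATEMENT 3: A connected commutative cocommutative graded Hopf algebra `A` over `F_p` is
isomorphic as an algebra to a polynomial algebra iff the Frobenius `x ↦ x^p` is injective.
-/

open TensorProduct

universe u

def IsCocomm (k A : Type*) [CommRing k] [AddCommMonoid A] [Module k A]
    [Coalgebra k A] : Prop :=
  (TensorProduct.comm k A A).toLinearMap ∘ₗ Coalgebra.comul = (Coalgebra.comul : A →ₗ[k] A ⊗[k] A)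

section Derivations

open WithConv

variable {k A : Type*} [CommRing k] [CommRing A]

/-- The map of dual numbers induced by an algebra homomorphism. -/
def DualNumber.mapAlgHom {B C : Type*} [CommRing B] [CommRing C] [Algebra k B] [Algebra k C]
    (e : B →ₐ[k] C) : DualNumber B →ₐ[k] DualNumber C where
  toFun x := (e x.fst, e x.snd)
  map_one' := TrivSqZeroExt.ext (map_one e) (map_zero e)
  map_zero' := TrivSqZeroExt.ext (map_zero e) (map_zero e)
  map_add' x y := TrivSqZeroExt.ext (map_add e x.fst y.fst) (map_add e x.snd y.snd)
  map_mul' x y := by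
    refine TrivSqZeroExt.ext (map_mul e x.fst y.fst) ?_
    change e (x.fst * y.snd + x.snd * y.fst) = e x.fst * e y.snd + e x.snd * e y.fst
    simp
  commutes' r := by
    apply TrivSqZeroExt.ext
    · exact e.commutes r
    · exact map_zero e

theorem AlgHom.ofId_comp_convMul_eq_one {B : Type*} [CommRing B] [Algebra k B] [Bialgebra k A]
    {f g : A →ₐ[k] k} (h : toConv f * toConv g = 1) :
    toConv ((Algebra.ofId k B).comp f) * toConv ((Algebra.ofId k B).comp g) = 1 := by
  have := AlgHom.comp_convMul_distrib (Algebra.ofId k B) (toConv f) (toConv g)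
  rw [h] at this
  exact ofConv_injective this.symm

theorem AlgHom.ofId_comp_convMul_cancel_left {B : Type*} [CommRing B] [Algebra k B]
    [Bialgebra k A] {f g : A →ₐ[k] k} (h : toConv f * toConv g = 1) (Ψ : A →ₐ[k] B) :
    toConv ((Algebra.ofId k B).comp f) * (toConv ((Algebra.ofId k B).comp g) * toConv Ψ) =
      toConv Ψ := by
  rw [← mul_assoc, AlgHom.ofId_comp_convMul_eq_one h, one_mul]

/-- A tangent vector at a rational point of a commutative Hopf algebra
extends to a global derivation. -/
theorem HopfAlgebra.exists_derivation_of_dualNumber [HopfAlgebra k A]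
    (e : A →ₐ[k] k) (Φ : A →ₐ[k] DualNumber k) (hΦ : ∀ a, (Φ a).fst = e a) :
    ∃ D : Derivation k A A, ∀ a, e (D a) = (Φ a).snd := by
  obtain ⟨e', hinv, hinv'⟩ : ∃ e' : A →ₐ[k] k, toConv e' * toConv e = 1 ∧
      toConv e * toConv e' = 1 :=
    ⟨((toConv e)⁻¹).ofConv, inv_mul_cancel (toConv e), mul_inv_cancel (toConv e)⟩
  let ι : A →ₐ[k] DualNumber A := TrivSqZeroExt.inlAlgHom k A A
  let F : A →ₐ[k] DualNumber A := ofConv (toConv ι *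
    toConv (ofConv (toConv ((Algebra.ofId k (DualNumber A)).comp e') *
      toConv ((DualNumber.mapAlgHom (Algebra.ofId k A)).comp Φ))))
  have hfst : (TrivSqZeroExt.fstHom k A A).comp F = AlgHom.id k A := by
    rw [AlgHom.comp_convMul_distrib, ofConv_toConv, ofConv_toConv, AlgHom.comp_convMul_distrib]
    have h1 : (TrivSqZeroExt.fstHom k A A).comp ι = AlgHom.id k A := by ext; rfl
    have h2 : (TrivSqZeroExt.fstHom k A A).comp ((Algebra.ofId k (DualNumber A)).comp e') =
      (Algebra.ofId k A).comp e' := by ext; rfl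
    have h3 : (TrivSqZeroExt.fstHom k A A).comp
        ((DualNumber.mapAlgHom (Algebra.ofId k A)).comp Φ) = (Algebra.ofId k A).comp e := by
      ext a
      exact congrArg (algebraMap k A) (hΦ a)
    rw [ofConv_toConv, ofConv_toConv, toConv_ofConv, h1, h2, h3,
      AlgHom.ofId_comp_convMul_eq_one hinv, toConv_ofConv, mul_one]
  have hΦF : (DualNumber.mapAlgHom e).comp F = Φ := by
    rw [AlgHom.comp_convMul_distrib, ofConv_toConv, ofConv_toConv, AlgHom.comp_convMul_distrib]
    have h1 : (DualNumber.mapAlgHom e).comp ι = (Algebra.ofId k (DualNumber k)).comp e := by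
      ext a
      · rfl
      · exact map_zero e
    have h2 : (DualNumber.mapAlgHom e).comp ((Algebra.ofId k (DualNumber A)).comp e') =
        (Algebra.ofId k (DualNumber k)).comp e' := by
      ext a
      · exact e.commutes _
      · exact map_zero e
    have h3 : (DualNumber.mapAlgHom e).comp
        ((DualNumber.mapAlgHom (Algebra.ofId k A)).comp Φ) = Φ := by
      ext a
      · exact e.commutes _
      · exact e.commutes _
    rw [ofConv_toConv, ofConv_toConv, h1, h2, h3]
    exact congrArg ofConv (AlgHom.ofId_comp_convMul_cancel_left hinv' Φ)
  have hF (a : A) : (F a).fst = a := DFunLike.congr_fun hfst a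
  refine ⟨Derivation.mk' ((TrivSqZeroExt.sndHom A A).restrictScalars k ∘ₗ F.toLinearMap) ?_, ?_⟩
  · intro a b
    simp [hF, mul_comm]
  · intro a
    exact congrArg TrivSqZeroExt.snd (DFunLike.congr_fun hΦF a)

/-- A point derivation at a rational point of a commutative Hopf algebra
extends to a global derivation. -/
theorem HopfAlgebra.exists_derivation [HopfAlgebra k A] (e : A →ₐ[k] k) (φ : A →ₗ[k] k)
    (h1 : φ 1 = 0) (hφ : ∀ a b, φ (a * b) = e a * φ b + φ a * e b) :
    ∃ D : Derivation k A A, ∀ a, e (D a) = φ a := by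
  let L : A →ₗ[k] DualNumber k :=
    { toFun := fun a => (e a, φ a)
      map_add' := fun a b => by
        apply TrivSqZeroExt.ext
        · exact map_add e a b
        · exact map_add φ a b
      map_smul' := fun c a => by
        apply TrivSqZeroExt.ext
        · exact map_smul e c a
        · exact map_smul φ c a }
  refine HopfAlgebra.exists_derivation_of_dualNumber e (AlgHom.ofLinearMap L ?_ ?_) fun _ => rfl
  · apply TrivSqZeroExt.ext
    · exact map_one e
    · exact h1
  · intro a b
    apply TrivSqZeroExt.ext
    · exact map_mul e a b
    · exact hφ a b

end Derivations

section Polynomials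

open MvPolynomial

theorem MvPolynomial.exists_expand_eq_of_pderiv_eq_zero {σ k : Type*} [Field k] (p : ℕ)
    [Fact p.Prime] [CharP k p] (f : MvPolynomial σ k) (hf : ∀ i, pderiv i f = 0) :
    ∃ g, expand p g = f := by
  have hdvd : ∀ m ∈ f.support, ∃ n : σ →₀ ℕ, p • n = m := by
    intro m hm
    have hpm : ∀ i, p ∣ m i := by
      intro i
      by_cases hi : m i = 0
      · simp [hi]
      have h := coeff_pderiv (i := i) f (m - Finsupp.single i 1)
      have hle : Finsupp.single i 1 ≤ m := by
        rw [Finsupp.single_le_iff]; omega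
      rw [hf i, tsub_add_cancel_of_le hle, coeff_zero] at h
      have h2 := (mul_eq_zero.mp h.symm).resolve_left (mem_support_iff.mp hm)
      rw [← CharP.cast_eq_zero_iff k p]
      have : (m - Finsupp.single i 1 : σ →₀ ℕ) i + 1 = m i := by
        simp; omega
      rw [← this]
      exact_mod_cast h2
    refine ⟨m.mapRange (· / p) (by simp), ?_⟩
    ext i
    simpa using Nat.mul_div_cancel' (hpm i)
  have hmem : f ∈ (expand p : MvPolynomial σ k →ₐ[k] _).range := by
    rw [f.as_sum]
    refine sum_mem fun m hm => ?_
    obtain ⟨n, hn⟩ := hdvd m hm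
    exact ⟨monomial n (coeff m f), by simp [expand_monomial, hn]⟩
  exact hmem

theorem Derivation.map_mvPolynomial_aeval {σ k A : Type*} [CommRing k] [CommRing A] [Algebra k A]
    (D : Derivation k A A) (x : σ → A) (s : Finset σ) {f : MvPolynomial σ k}
    (hf : f ∈ supported k (s : Set σ)) :
    D (aeval x f) = ∑ j ∈ s, aeval x (pderiv j f) * D (x j) := by
  classical
  induction hf using Algebra.adjoin_induction with
  | mem f hf =>
    obtain ⟨i, hi, rfl⟩ := hf
    rw [Finset.sum_eq_single i]
    · simp
    · intro j _ hj
      simp [pderiv_X_of_ne hj.symm]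
    · intro h
      exact absurd hi h
  | algebraMap r => simp [algebraMap_eq]
  | add f g _ _ hf hg => simp [hf, hg, add_mul, Finset.sum_add_distrib]
  | mul f g _ _ hf hg =>
    simp only [map_mul, Derivation.leibniz, hf, hg, smul_eq_mul, map_add, add_mul,
      Finset.sum_add_distrib, Finset.mul_sum, mul_assoc]

theorem MvPolynomial.totalDegree_pderiv_lt {σ k : Type*} [CommRing k] (i : σ)
    (f : MvPolynomial σ k) (h : pderiv i f ≠ 0) :
    (pderiv i f).totalDegree < f.totalDegree := by
  have hlt : ∀ m ∈ (pderiv i f).support, (m.sum fun _ n => n) < f.totalDegree := by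
    intro m hm
    have hm' : m + Finsupp.single i 1 ∈ f.support := by
      rw [mem_support_iff, coeff_pderiv] at hm
      exact mem_support_iff.mpr (left_ne_zero_of_mul hm)
    have := le_totalDegree hm'
    rw [Finsupp.sum_add_index' (fun _ => rfl) (fun _ _ _ => rfl)] at this
    simp only [Finsupp.sum_single_index] at this
    omega
  obtain ⟨m, hm⟩ := support_nonempty.mpr h
  exact (Finset.sup_lt_iff (Nat.zero_lt_of_lt (hlt m hm))).mpr hlt

/-- Elements of a reduced algebra over `ZMod p` with `A`-linearly independent differentials are
algebraically independent. -/
theorem algebraicIndependent_of_derivations {p : ℕ} [Fact p.Prime] {σ A : Type*} [CommRing A]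
    [Algebra (ZMod p) A] (hA : Function.Injective fun x : A => x ^ p) [Nontrivial A]
    (x : σ → A) (D : σ → Derivation (ZMod p) A A)
    (hD : ∀ (s : Finset σ) (a : σ → A), (∀ i ∈ s, ∑ j ∈ s, a j * D i (x j) = 0) →
      ∀ j ∈ s, a j = 0) :
    AlgebraicIndependent (ZMod p) x := by
  have hp := (Fact.out : p.Prime)
  rw [algebraicIndependent_iff]
  intro f
  induction hn : f.totalDegree using Nat.strong_induction_on generalizing f with
  | _ n ih =>
  subst hn
  intro hf
  have hder : ∀ i, pderiv i f = 0 := by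
    intro i
    by_contra hi
    by_cases hiv : i ∈ f.vars
    · have key := hD f.vars (fun j => aeval x (pderiv j f)) (fun i _ => by
        rw [← (D i).map_mvPolynomial_aeval x f.vars (mem_supported_vars f), hf, map_zero]) i hiv
      exact hi (ih _ (totalDegree_pderiv_lt i f hi) _ rfl key)
    · exact hi (pderiv_eq_zero_of_notMem_vars hiv)
  obtain ⟨g, hg⟩ := exists_expand_eq_of_pderiv_eq_zero p f hder
  have hgx : aeval x g = 0 := by
    apply hA
    simp only
    rw [← map_pow, ← expand_zmod, hg, hf, zero_pow hp.ne_zero]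
  by_cases hg0 : g.totalDegree = 0
  · rw [totalDegree_eq_zero_iff_eq_C] at hg0
    rw [hg0, aeval_C] at hgx
    have : coeff 0 g = 0 := (algebraMap (ZMod p) A).injective (by simpa using hgx)
    rw [← hg, hg0, this]
    simp
  · have hlt : g.totalDegree < f.totalDegree := by
      rw [← hg, totalDegree_expand]
      exact lt_mul_of_one_lt_right (Nat.pos_of_ne_zero hg0) hp.one_lt
    rw [← hg, ih _ hlt g rfl hgx, map_zero]

end Polynomials

section Graded

open DirectSum

variable {k : Type*} {A : Type u} [Field k] [CommRing A] [Algebra k A]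
  (𝒜 : ℕ → Submodule k A) [GradedAlgebra 𝒜]

theorem coe_decompose_mul_apply (a b : A) (n : ℕ) :
    (decompose 𝒜 (a * b) n : A) =
      ∑ ij ∈ Finset.HasAntidiagonal.antidiagonal n, (decompose 𝒜 a ij.1 : A) * decompose 𝒜 b ij.2 := by
  rw [decompose_mul, coe_mul_apply_eq_sum_antidiagonal]

theorem eq_zero_of_mul_eq_zero_of_decompose_zero_eq_one {d a : A}
    (hd : (decompose 𝒜 d 0 : A) = 1) (hda : d * a = 0) : a = 0 := by
  have h : ∀ n, (decompose 𝒜 a n : A) = 0 := by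
    intro n
    induction n using Nat.strong_induction_on with
    | _ n ih =>
    have h0 := coe_decompose_mul_apply 𝒜 d a n
    rw [hda, Finset.sum_eq_single (0, n)] at h0
    · simpa [hd] using h0.symm
    · rintro ⟨i, j⟩ hij hne
      rw [Finset.HasAntidiagonal.mem_antidiagonal] at hij
      have hj : j < n := by
        rcases Nat.eq_zero_or_pos i with rfl | hi
        · exact absurd (by simpa using hij) hne
        · simp only at hij
          omega
      rw [ih j hj, mul_zero]
    · intro h
      simp at h
  apply (decompose 𝒜).injective
  ext n
  simpa using h n

theorem exists_augmentation_of_connected [Nontrivial A]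
    (hconn : ∀ x ∈ 𝒜 0, ∃ c : k, x = c • (1 : A)) :
    ∃ e : A →ₐ[k] k, ∀ a, (decompose 𝒜 a 0 : A) = algebraMap k A (e a) := by
  have hinj := (algebraMap k A).injective
  have hex : ∀ a : A, ∃ c : k, GradedRing.projZeroRingHom 𝒜 a = algebraMap k A c := by
    intro a
    obtain ⟨c, hc⟩ := hconn _ (decompose 𝒜 a 0).2
    exact ⟨c, hc.trans (Algebra.algebraMap_eq_smul_one c).symm⟩
  choose e he using hex
  exact ⟨
    { toFun := e
      map_one' := hinj (by rw [← he, map_one, map_one])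
      map_mul' := fun a b => hinj (by rw [← he, map_mul, map_mul, he, he])
      map_zero' := hinj (by rw [← he, map_zero, map_zero])
      map_add' := fun a b => hinj (by rw [← he, map_add, map_add, he, he])
      commutes' := fun c => hinj (by
        rw [← he]
        exact decompose_of_mem_same 𝒜 (SetLike.algebraMap_mem_graded 𝒜 c)) }, he⟩

theorem decompose_mem_of_isHomogeneousElem {a : A} (ha : SetLike.IsHomogeneousElem 𝒜 a)
    {B : Submodule k A} (hB : a ∈ B) (n : ℕ) : (decompose 𝒜 a n : A) ∈ B := by
  obtain ⟨m, hm⟩ := ha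
  by_cases h : m = n
  · subst h
    rwa [decompose_of_mem_same 𝒜 hm]
  · rw [decompose_of_mem_ne 𝒜 hm h]
    exact B.zero_mem

/-- A set of homogeneous elements spanning the indecomposables of a connected graded algebra
generates it. -/
theorem adjoin_eq_top_of_span_sup_eq_top (e : A →ₐ[k] k)
    (he : ∀ a, (decompose 𝒜 a 0 : A) = algebraMap k A (e a)) (s : Set A)
    (hs : ∀ a ∈ s, SetLike.IsHomogeneousElem 𝒜 a)
    (hspan : Submodule.span k s ⊔
      (Submodule.span k {1} ⊔ (RingHom.ker e ^ 2).restrictScalars k) = ⊤) :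
    Algebra.adjoin k s = ⊤ := by
  set B := Algebra.adjoin k s with hBdef
  have hone : ∀ n, (decompose 𝒜 (1 : A) n : A) ∈ B := fun n =>
    decompose_mem_of_isHomogeneousElem 𝒜 ⟨0, SetLike.GradedOne.one_mem⟩
      (B := Subalgebra.toSubmodule B) B.one_mem n
  have hproj : ∀ n y, GradedAlgebra.proj 𝒜 n y = (decompose 𝒜 y n : A) := fun _ _ => rfl
  have hdeg : ∀ n, ∀ y : A, (decompose 𝒜 y n : A) ∈ B := by
    intro n
    induction n using Nat.strong_induction_on with
    | _ n ih =>
    suffices h : (⊤ : Submodule k A) ≤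
        (Subalgebra.toSubmodule B).comap (GradedAlgebra.proj 𝒜 n) from fun y => h trivial
    rw [← hspan, sup_le_iff, sup_le_iff, Submodule.span_le, Submodule.span_le,
      Set.singleton_subset_iff]
    refine ⟨fun a ha => ?_, hone n, fun z hz => ?_⟩
    · exact decompose_mem_of_isHomogeneousElem 𝒜 (hs a ha) (B := Subalgebra.toSubmodule B)
        (Algebra.subset_adjoin ha) n
    · rw [Submodule.restrictScalars_mem, pow_two] at hz
      induction hz using Submodule.mul_induction_on' with
      | mem_mul_mem u hu v hv =>
        have hker : ∀ w ∈ RingHom.ker e, (decompose 𝒜 w 0 : A) = 0 := fun w hw => by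
          rw [he, RingHom.mem_ker.mp hw, map_zero]
        rw [Submodule.mem_comap, hproj, coe_decompose_mul_apply]
        refine Submodule.sum_mem _ fun ij hij => ?_
        rw [Finset.HasAntidiagonal.mem_antidiagonal] at hij
        by_cases h1 : ij.1 = 0
        · rw [h1, hker u hu, zero_mul]
          exact zero_mem _
        by_cases h2 : ij.2 = 0
        · rw [h2, hker v hv, mul_zero]
          exact zero_mem _
        exact B.mul_mem (ih _ (by omega) u) (ih _ (by omega) v)
      | add x _ y _ hx hy => exact add_mem hx hy
  rw [eq_top_iff]
  intro y _
  classical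
  rw [← sum_support_decompose 𝒜 y]
  exact sum_mem fun n _ => hdeg n y

/-- A connected graded algebra has generators together with dual point derivations at the
augmentation. -/
theorem exists_generators_with_dual_derivations (e : A →ₐ[k] k)
    (he : ∀ a, (decompose 𝒜 a 0 : A) = algebraMap k A (e a)) :
    ∃ (σ : Type u) (x : σ → A) (φ : σ → A →ₗ[k] k), Algebra.adjoin k (Set.range x) = ⊤ ∧
      (∀ i, φ i 1 = 0) ∧ (∀ i a b, φ i (a * b) = e a * φ i b + φ i a * e b) ∧
      (∀ i, φ i (x i) = 1) ∧ ∀ i j, i ≠ j → φ i (x j) = 0 := by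
  let N : Submodule k A := Submodule.span k {1} ⊔ (RingHom.ker e ^ 2).restrictScalars k
  have h1N : (1 : A) ∈ N := Submodule.mem_sup_left (Submodule.mem_span_singleton_self 1)
  have hN : ∀ a ∈ RingHom.ker e, ∀ b ∈ RingHom.ker e, a * b ∈ N := fun a ha b hb => by
    refine Submodule.mem_sup_right ?_
    rw [Submodule.restrictScalars_mem, pow_two]
    exact Ideal.mul_mem_mul ha hb
  obtain ⟨σ, c, -, hspan, hli⟩ := exists_linearIndependent' k
    (fun a : {a : A // SetLike.IsHomogeneousElem 𝒜 a} => N.mkQ a)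
  have hhom : Submodule.span k
      (Set.range (Subtype.val : {a : A // SetLike.IsHomogeneousElem 𝒜 a} → A)) = ⊤ := by
    rw [eq_top_iff]
    intro y _
    classical
    rw [← sum_support_decompose 𝒜 y]
    exact sum_mem fun n _ => Submodule.subset_span ⟨⟨_, n, (decompose 𝒜 y n).2⟩, rfl⟩
  have htop : Submodule.span k (Set.range fun i => N.mkQ (c i : A)) = ⊤ := by
    refine hspan.trans ?_
    rw [show (fun a : {a : A // SetLike.IsHomogeneousElem 𝒜 a} => N.mkQ (a : A)) =
      N.mkQ ∘ Subtype.val from rfl, Set.range_comp, ← Submodule.map_span, hhom,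
      Submodule.map_top, Submodule.range_mkQ]
  let b := Module.Basis.mk hli htop.ge
  have hb : ∀ i, N.mkQ (c i : A) = b i := fun i => by simp [b]
  have hφN : ∀ i, ∀ a ∈ N, (b.coord i ∘ₗ N.mkQ) a = 0 := fun i a ha => by
    rw [LinearMap.comp_apply, Submodule.mkQ_apply, (Submodule.Quotient.mk_eq_zero N).mpr ha,
      map_zero]
  refine ⟨σ, fun i => c i, fun i => b.coord i ∘ₗ N.mkQ, ?_, fun i => hφN i 1 h1N, ?_, ?_, ?_⟩
  · refine adjoin_eq_top_of_span_sup_eq_top 𝒜 e he _ ?_ ?_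
    · rintro _ ⟨i, rfl⟩
      exact (c i).2
    · change _ ⊔ N = ⊤
      rw [show (Set.range fun i => N.mkQ (c i : A)) = N.mkQ '' Set.range fun i => (c i : A) from
        Set.range_comp _ _, ← Submodule.map_span] at htop
      rw [sup_comm, ← Submodule.comap_map_mkQ, htop, Submodule.comap_top]
  · intro i a b'
    have hmem : (a - algebraMap k A (e a)) * (b' - algebraMap k A (e b')) ∈ N :=
      hN _ (by simp [RingHom.mem_ker]) _ (by simp [RingHom.mem_ker])
    have hab : a * b' = (a - algebraMap k A (e a)) * (b' - algebraMap k A (e b')) +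
        (e a • b' + e b' • a - (e a * e b') • (1 : A)) := by
      simp only [Algebra.smul_def, map_mul]
      ring
    rw [hab, map_add, hφN i _ hmem, map_sub, map_add, map_smul, map_smul, map_smul, hφN i 1 h1N]
    simp [mul_comm]
  · intro i
    simp [-Submodule.mkQ_apply, hb]
  · intro i j hij
    simp [-Submodule.mkQ_apply, hb, hij.symm]

/-- The Jacobian matrix of derivations dual to a family at the augmentation is injective. -/
theorem eq_zero_of_sum_mul_derivation_eq_zero (e : A →ₐ[k] k)
    (he : ∀ a, (decompose 𝒜 a 0 : A) = algebraMap k A (e a)) {σ : Type*} (M : σ → σ → A)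
    (hdiag : ∀ i, e (M i i) = 1) (hoff : ∀ i j, i ≠ j → e (M i j) = 0) (s : Finset σ) (a : σ → A)
    (ha : ∀ i ∈ s, ∑ j ∈ s, a j * M i j = 0) : ∀ j ∈ s, a j = 0 := by
  classical
  let J : Matrix s s A := Matrix.of fun i j => M i j
  have hJ : e J.det = 1 := by
    rw [AlgHom.map_det]
    convert Matrix.det_one (n := s) (R := k)
    ext i j
    by_cases h : i = j
    · subst h
      simp [J, hdiag]
    · simp [J, h, hoff _ _ (fun h' => h (Subtype.ext h'))]
  have hmul : J.mulVec (fun j => a j) = 0 := by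
    ext i
    rw [Matrix.mulVec, dotProduct, Pi.zero_apply, ← ha i i.2, ← Finset.sum_coe_sort s]
    exact Finset.sum_congr rfl fun j _ => mul_comm _ _
  have hdet : J.det • (fun j : s => a j) = 0 := by
    rw [← Matrix.one_mulVec (fun j : s => a j), ← Matrix.smul_mulVec, ← Matrix.adjugate_mul,
      ← Matrix.mulVec_mulVec, hmul, Matrix.mulVec_zero]
  intro j hj
  exact eq_zero_of_mul_eq_zero_of_decompose_zero_eq_one 𝒜 (by rw [he, hJ, map_one])
    (congrFun hdet ⟨j, hj⟩)

end Graded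

theorem polynomial_iff_frobenius_injective
    (p : ℕ) [Fact p.Prime] (A : Type u)
    [CommRing A] [HopfAlgebra (ZMod p) A]
    (hA : IsCocomm (ZMod p) A)
    (𝒜 : ℕ → Submodule (ZMod p) A) [GradedAlgebra 𝒜]
    -- connectedness: the degree-zero part is spanned by `1`
    (hconn : ∀ x ∈ 𝒜 0, ∃ c : ZMod p, x = c • (1 : A)) :
    (∃ σ : Type u, Nonempty (A ≃ₐ[ZMod p] MvPolynomial σ (ZMod p))) ↔
      Function.Injective (fun x : A => x ^ p) := by
  constructor
  · rintro ⟨σ, ⟨f⟩⟩ x y hxy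
    apply f.injective
    apply frobenius_inj (MvPolynomial σ (ZMod p)) p
    simpa [frobenius_def] using congrArg f hxy
  · intro hinj
    have : Nontrivial A := (Bialgebra.counitAlgHom (ZMod p) A).toRingHom.domain_nontrivial
    obtain ⟨e, he⟩ := exists_augmentation_of_connected 𝒜 hconn
    obtain ⟨σ, x, φ, hgen, hφ1, hφ, hdiag, hoff⟩ :=
      exists_generators_with_dual_derivations 𝒜 e he
    choose D hD using fun i => HopfAlgebra.exists_derivation e (φ i) (hφ1 i) (hφ i)
    have hind : AlgebraicIndependent (ZMod p) x :=
      algebraicIndependent_of_derivations hinj x D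
        (eq_zero_of_sum_mul_derivation_eq_zero 𝒜 e he (fun i j => D i (x j))
          (fun i => by rw [hD, hdiag]) (fun i j hij => by rw [hD, hoff i j hij]))
    refine ⟨σ, ⟨(AlgEquiv.ofBijective (MvPolynomial.aeval x) ⟨hind, ?_⟩).symm⟩⟩
    rw [← AlgHom.range_eq_top, ← Algebra.adjoin_range_eq_range_aeval, hgen]
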